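/- Let P ∈ ℝ[x] be a nonzero real polynomial. Then its quaternionic Mahler measure reduces to a one-dimensional integral: ∫_{T¹(ℍ)} log|P(q)| dμ(q) = (2/π)·∫₀^π log|P(cos θ + i sin θ)| · sin²θ dθ, where on the right P is evaluated at the complex number e^{iθ} = cos θ + i sin θ. -/

import Mathlib

open MeasureTheory Quaternion

noncomputable instance : MeasurableSpace (Quaternion ℝ) := borel _
instance : BorelSpace (Quaternion ℝ) := ⟨rfl⟩
instance : Nonempty (Metric.sphere (0 : Quaternion ℝ) 1) := ⟨⟨1, by simp⟩⟩

/-- The probability Haar measure `μ` on the group `T¹(ℍ)` of unit quaternions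
(the Haar measure normalized so that the whole group has measure `1`). -/
noncomputable def muH : Measure (Metric.sphere (0 : Quaternion ℝ) 1) :=
  Measure.haarMeasure ⊤

/-- The quaternionic Mahler measure `m_ℍ(f) = ∫_{T¹(ℍ)} log |f(q)| dμ(q)`. -/
noncomputable def mahlerH (f : Quaternion ℝ → Quaternion ℝ) : ℝ :=
  ∫ q : Metric.sphere (0 : Quaternion ℝ) 1, Real.log ‖f q‖ ∂muH

/-! The real part of a Haar-random unit quaternion is distributed as `cos θ` for `θ` with the
Sato–Tate law `(2/π) sin² θ dθ`, and `|P(q)| = |P(e^{iθ})|` whenever `Re q = cos θ`: modulo the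
real quadratic polynomial `X² - 2 (Re q) X + |q|²`, which kills `q`, the polynomial `P` is linear.

Both laws satisfy the Stein identity `E[(1 - x²) g'(x) - 3 x g(x)] = 0`. On the quaternionic side,
differentiate the invariance of the Haar measure along the one-parameter groups generated by
`i, j, k`; on the other side, integrate by parts. On polynomials, the identity determines every
moment from the total mass, and compactly supported measures are determined by their moments. -/

open Polynomial Set

section SteinOperator

variable {k : Type*} [CommRing k] (c : k)

/-- The Stein operator `p ↦ (1 - X²) p' - c X p`. For `c = d - 1`, its values have mean zero under
the law of a coordinate of a uniform random point of the unit sphere of `ℝ^d`. -/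
noncomputable def steinOperator : k[X] →ₗ[k] k[X] :=
  LinearMap.mulLeft k (1 - X ^ 2) ∘ₗ derivative - LinearMap.mulLeft k (C c * X)

theorem steinOperator_apply (p : k[X]) :
    steinOperator c p = (1 - X ^ 2) * derivative p - C c * X * p :=
  rfl

theorem steinOperator_X_pow_succ (n : ℕ) :
    steinOperator c (X ^ (n + 1)) =
      ((n + 1 : ℕ) : k) • X ^ n - (((n + 1 : ℕ) : k) + c) • X ^ (n + 2) := by
  simp only [steinOperator_apply, derivative_X_pow, smul_eq_C_mul, C_add, Nat.add_sub_cancel]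
  ring

end SteinOperator

theorem span_one_sup_range_steinOperator {k : Type*} [Field k] {c : k}
    (hc : ∀ n : ℕ, (n : k) + c ≠ 0) :
    k ∙ (1 : k[X]) ⊔ LinearMap.range (steinOperator c) = ⊤ := by
  set S := k ∙ (1 : k[X]) ⊔ LinearMap.range (steinOperator c)
  have range_mem (p : k[X]) : steinOperator c p ∈ S :=
    Submodule.mem_sup_right (LinearMap.mem_range_self _ p)
  have X_pow_mem (n : ℕ) : (X : k[X]) ^ n ∈ S := by
    induction n using Nat.twoStepInduction with
    | zero => simpa using! Submodule.mem_sup_left (Submodule.mem_span_singleton_self (1 : k[X]))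
    | one =>
      have h : c • X = -steinOperator c (1 : k[X]) := by
        simp [steinOperator_apply, smul_eq_C_mul]
      rw [pow_one, ← S.smul_mem_iff (by simpa using hc 0), h]
      exact S.neg_mem (range_mem 1)
    | more n ih _ =>
      have h : (((n + 1 : ℕ) : k) + c) • (X : k[X]) ^ (n + 2) =
          ((n + 1 : ℕ) : k) • X ^ n - steinOperator c (X ^ (n + 1)) := by
        rw [steinOperator_X_pow_succ, sub_sub_cancel]
      rw [← S.smul_mem_iff (hc (n + 1)), h]
      exact S.sub_mem (S.smul_mem _ ih) (range_mem _)
  refine eq_top_iff.mpr fun p _ ↦ ?_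
  rw [p.as_sum_range_C_mul_X_pow]
  exact S.sum_mem fun n _ ↦ smul_eq_C_mul (p.coeff n) ▸ S.smul_mem _ (X_pow_mem n)

theorem measure_eq_of_integral_eq_of_separatesPoints {X : Type*} [TopologicalSpace X]
    [CompactSpace X] [HasOuterApproxClosed X] [SecondCountableTopology X] [MeasurableSpace X]
    [BorelSpace X] {μ ν : Measure X} [IsFiniteMeasure μ] [IsFiniteMeasure ν]
    {A : Subalgebra ℝ C(X, ℝ)} (hA : A.SeparatesPoints)
    (h : ∀ f ∈ A, ∫ x, f x ∂μ = ∫ x, f x ∂ν) : μ = ν := by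
  have continuous_integral (ρ : Measure X) [IsFiniteMeasure ρ] :
      Continuous fun f : C(X, ℝ) ↦ ∫ x, f x ∂ρ := by
    refine (MeasureTheory.continuous_integral.comp
      (ContinuousMap.toLp (E := ℝ) 1 ρ ℝ).continuous).congr fun f ↦ ?_
    exact integral_congr_ae (ContinuousMap.coeFn_toLp ρ f)
  have isClosed_eq_integral : IsClosed {f : C(X, ℝ) | ∫ x, f x ∂μ = ∫ x, f x ∂ν} :=
    isClosed_eq (continuous_integral μ) (continuous_integral ν)
  refine ext_of_forall_integral_eq_of_IsFiniteMeasure fun f ↦ ?_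
  have mem_closure : f.toContinuousMap ∈ A.topologicalClosure := by
    rw [ContinuousMap.subalgebra_topologicalClosure_eq_top_of_separatesPoints A hA]
    exact Algebra.mem_top
  exact closure_minimal h isClosed_eq_integral mem_closure

section MomentProblem

variable {K : Set ℝ} {μ ν : Measure ℝ}

theorem integrable_of_continuous_of_ae_mem_isCompact [IsFiniteMeasure μ] (hK : IsCompact K)
    (hμ : ∀ᵐ x ∂μ, x ∈ K) {f : ℝ → ℝ} (hf : Continuous f) : Integrable f μ := by
  obtain ⟨C, hC⟩ := hK.exists_bound_of_continuousOn hf.continuousOn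
  exact .of_bound hf.aestronglyMeasurable C (hμ.mono hC)

theorem measure_eq_of_forall_integral_eval_eq [IsFiniteMeasure μ] [IsFiniteMeasure ν]
    (hK : IsCompact K) (hμ : ∀ᵐ x ∂μ, x ∈ K) (hν : ∀ᵐ x ∂ν, x ∈ K)
    (h : ∀ p : ℝ[X], ∫ x, p.eval x ∂μ = ∫ x, p.eval x ∂ν) : μ = ν := by
  have map_comap {ρ : Measure ℝ} (hρ : ∀ᵐ x ∂ρ, x ∈ K) :
      (ρ.comap ((↑) : K → ℝ)).map (↑) = ρ := by
    rw [map_comap_subtype_coe hK.measurableSet, Measure.restrict_eq_self_of_ae_mem hρ]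
  have integral_comap {ρ : Measure ℝ} (hρ : ∀ᵐ x ∂ρ, x ∈ K) (p : ℝ[X]) :
      ∫ x : K, p.eval (x : ℝ) ∂ρ.comap (↑) = ∫ x, p.eval x ∂ρ := by
    rw [← (MeasurableEmbedding.subtype_coe hK.measurableSet).integral_map (p.eval ·),
      map_comap hρ]
  have : CompactSpace K := isCompact_iff_compactSpace.mp hK
  rw [← map_comap hμ, ← map_comap hν]
  congr 1
  refine measure_eq_of_integral_eq_of_separatesPoints (polynomialFunctions_separatesPoints K) ?_
  rintro - ⟨p, -, rfl⟩
  exact (integral_comap hμ p).trans ((h p).trans (integral_comap hν p).symm)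

theorem measure_eq_of_integral_steinOperator_eq_zero {c : ℝ} (hc : ∀ n : ℕ, (n : ℝ) + c ≠ 0)
    [IsProbabilityMeasure μ] [IsProbabilityMeasure ν] (hK : IsCompact K)
    (hμ : ∀ᵐ x ∂μ, x ∈ K) (hν : ∀ᵐ x ∂ν, x ∈ K)
    (hμc : ∀ p : ℝ[X], ∫ x, (steinOperator c p).eval x ∂μ = 0)
    (hνc : ∀ p : ℝ[X], ∫ x, (steinOperator c p).eval x ∂ν = 0) : μ = ν := by
  have integral_add_stein {ρ : Measure ℝ} [IsProbabilityMeasure ρ] (hρ : ∀ᵐ x ∂ρ, x ∈ K)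
      (hρc : ∀ p : ℝ[X], ∫ x, (steinOperator c p).eval x ∂ρ = 0) (a : ℝ) (r : ℝ[X]) :
      ∫ x, (a • 1 + steinOperator c r).eval x ∂ρ = a := by
    simp only [eval_add, eval_smul, eval_one, smul_eq_mul, mul_one]
    rw [integral_add (integrable_const a)
      (integrable_of_continuous_of_ae_mem_isCompact hK hρ (Polynomial.continuous _)), hρc]
    simp
  refine measure_eq_of_forall_integral_eval_eq hK hμ hν fun p ↦ ?_
  have hp : p ∈ ℝ ∙ (1 : ℝ[X]) ⊔ LinearMap.range (steinOperator c) :=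
    span_one_sup_range_steinOperator hc ▸ Submodule.mem_top
  obtain ⟨_, ha, _, ⟨r, rfl⟩, rfl⟩ := Submodule.mem_sup.mp hp
  obtain ⟨a, rfl⟩ := Submodule.mem_span_singleton.mp ha
  rw [integral_add_stein hμ hμc, integral_add_stein hν hνc]

end MomentProblem

theorem integral_eq_zero_of_hasDerivAt_mul_left {G E : Type*} [Group G] [TopologicalSpace G]
    [CompactSpace G] [ContinuousMul G] [MeasurableSpace G] [BorelSpace G] [MeasurableMul G]
    [NormedAddCommGroup E] [NormedSpace ℝ E] {μ : Measure G} [IsFiniteMeasure μ]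
    [μ.IsMulLeftInvariant] {γ : ℝ → G} {f f' : G → E} (hf : Continuous f) (hf' : Continuous f')
    (hderiv : ∀ t g, HasDerivAt (fun s ↦ f (γ s * g)) (f' (γ t * g)) t) :
    ∫ g, f' g ∂μ = 0 := by
  have integrable {h : G → E} (hh : Continuous h) : Integrable h μ :=
    hh.integrable_of_hasCompactSupport (.of_compactSpace h)
  obtain ⟨C, hC⟩ := isCompact_univ.exists_bound_of_continuousOn hf'.continuousOn
  have hasDerivAt_integral : HasDerivAt (fun t ↦ ∫ g, f (γ t * g) ∂μ) (∫ g, f' (γ 0 * g) ∂μ) 0 :=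
    (hasDerivAt_integral_of_dominated_loc_of_deriv_le (bound := fun _ ↦ C) Filter.univ_mem
      (.of_forall fun t ↦ (integrable (hf.comp (continuous_const_mul (γ t)))).aestronglyMeasurable)
      (integrable (hf.comp (continuous_const_mul (γ 0))))
      (integrable (hf'.comp (continuous_const_mul (γ 0)))).aestronglyMeasurable
      (.of_forall fun g t _ ↦ hC (γ t * g) (mem_univ _)) (integrable_const C)
      (.of_forall fun g t _ ↦ hderiv t g)).2
  simp only [integral_mul_left_eq_self] at hasDerivAt_integral
  exact hasDerivAt_integral.unique (hasDerivAt_const 0 _)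

section UnitQuaternions

attribute [local fun_prop] Quaternion.continuous_re

instance : IsProbabilityMeasure muH :=
  ⟨Measure.haarMeasure_self (K₀ := (⊤ : TopologicalSpace.PositiveCompacts _))⟩

instance : muH.IsMulLeftInvariant := by
  unfold muH
  infer_instance

theorem sum_sq_unitQuaternion_eq_one (q : Metric.sphere (0 : ℍ) 1) :
    (q : ℍ).re ^ 2 + (q : ℍ).imI ^ 2 + (q : ℍ).imJ ^ 2 + (q : ℍ).imK ^ 2 = 1 := by
  rw [← Quaternion.normSq_def', Quaternion.normSq_eq_norm_mul_self, norm_eq_of_mem_sphere, one_mul]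

theorem re_unitQuaternion_mem_Icc (q : Metric.sphere (0 : ℍ) 1) :
    (q : ℍ).re ∈ Icc (-1) 1 := by
  refine abs_le.mp ((sq_le_one_iff_abs_le_one _).mp ?_)
  nlinarith only [sum_sq_unitQuaternion_eq_one q, sq_nonneg (q : ℍ).imI, sq_nonneg (q : ℍ).imJ,
    sq_nonneg (q : ℍ).imK]

theorem measurable_re_unitQuaternion :
    Measurable fun q : Metric.sphere (0 : ℍ) 1 ↦ (q : ℍ).re :=
  (Quaternion.continuous_re.comp continuous_subtype_val).measurable

theorem hasDerivAt_re {q : ℝ → ℍ} {q' : ℍ} {t : ℝ} (h : HasDerivAt q q' t) :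
    HasDerivAt (fun s ↦ (q s).re) q'.re t :=
  let reCLM : ℍ →L[ℝ] ℝ := ⟨QuaternionAlgebra.reₗ (-1) 0 (-1), Quaternion.continuous_re⟩
  reCLM.hasFDerivAt.comp_hasDerivAt t h

-- The integrand is the derivative of `g (Re q) * Re (u q)` along the flow `q ↦ exp (t u) q`.
theorem integral_muH_deriv_along_imaginary_eq_zero {g : ℝ → ℝ} (hg : ContDiff ℝ 1 g) {u : ℍ}
    (hu : u.re = 0) :
    ∫ q : Metric.sphere (0 : ℍ) 1, (deriv g (q : ℍ).re * (u * q).re ^ 2 +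
      g (q : ℍ).re * (u * (u * q)).re) ∂muH = 0 := by
  have hasDerivAt_g (x : ℝ) : HasDerivAt g (deriv g x) x :=
    (hg.differentiable one_ne_zero x).hasDerivAt
  let γ (t : ℝ) : Metric.sphere (0 : ℍ) 1 :=
    ⟨NormedSpace.exp (t • u), by simp [Quaternion.norm_exp, hu]⟩
  refine integral_eq_zero_of_hasDerivAt_mul_left (γ := γ)
    (f := fun q ↦ g (q : ℍ).re * (u * q).re) ?_ ?_ fun t q ↦ ?_
  · fun_prop
  · fun_prop
  · have hγ : HasDerivAt (fun s ↦ (γ s * q : ℍ)) (u * (γ t * q)) t := by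
      simpa only [mul_assoc] using! (hasDerivAt_exp_smul_const' u t).mul_const (q : ℍ)
    refine (((hasDerivAt_g _).comp t (hasDerivAt_re hγ)).mul
      (hasDerivAt_re (hγ.const_mul u))).congr_deriv ?_
    simp only [Function.comp_apply, Metric.unitSphere.coe_mul]
    ring

theorem integral_muH_stein_re_eq_zero {g : ℝ → ℝ} (hg : ContDiff ℝ 1 g) :
    ∫ q : Metric.sphere (0 : ℍ) 1, ((1 - (q : ℍ).re ^ 2) * deriv g (q : ℍ).re -
      3 * (q : ℍ).re * g (q : ℍ).re) ∂muH = 0 := by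
  let D (u : ℍ) (q : Metric.sphere (0 : ℍ) 1) : ℝ :=
    deriv g (q : ℍ).re * (u * q).re ^ 2 + g (q : ℍ).re * (u * (u * q)).re
  have integrable_D (u : ℍ) : Integrable (D u) muH :=
    Continuous.integrable_of_hasCompactSupport (by fun_prop) (.of_compactSpace (D u))
  have integral_D {u : ℍ} (hu : u.re = 0) : ∫ q, D u q ∂muH = 0 :=
    integral_muH_deriv_along_imaginary_eq_zero hg hu
  let i : ℍ := ⟨0, 1, 0, 0⟩
  let j : ℍ := ⟨0, 0, 1, 0⟩
  let k : ℍ := ⟨0, 0, 0, 1⟩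
  calc
    _ = ∫ q, (D i q + D j q + D k q) ∂muH := by
      refine integral_congr_ae (.of_forall fun q ↦ ?_)
      simp only [D, i, j, k, Quaternion.re_mul, Quaternion.imI_mul, Quaternion.imJ_mul,
        Quaternion.imK_mul]
      linear_combination -deriv g (q : ℍ).re * sum_sq_unitQuaternion_eq_one q
    _ = 0 := by
      rw [integral_add (f := fun q ↦ D i q + D j q) ((integrable_D i).add (integrable_D j))
        (integrable_D k), integral_add (integrable_D i) (integrable_D j), integral_D rfl,
        integral_D rfl, integral_D rfl, add_zero, add_zero]

end UnitQuaternions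

/-- The Sato–Tate measure `(2/π) sin² θ dθ` on `[0, π]`, as a measure on `ℝ`. -/
noncomputable def satoTateMeasure : Measure ℝ :=
  (volume.restrict (Ioc 0 Real.pi)).withDensity
    fun θ ↦ ENNReal.ofReal (2 / Real.pi * Real.sin θ ^ 2)

theorem ae_satoTateMeasure_mem_Icc : ∀ᵐ θ ∂satoTateMeasure, θ ∈ Icc 0 Real.pi :=
  (withDensity_absolutelyContinuous _ _).ae_le
    ((ae_restrict_mem measurableSet_Ioc).mono fun _ h ↦ Ioc_subset_Icc_self h)

theorem integral_satoTateMeasure {E : Type*} [NormedAddCommGroup E] [NormedSpace ℝ E] (f : ℝ → E) :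
    ∫ θ, f θ ∂satoTateMeasure =
      (2 / Real.pi) • ∫ θ in (0 : ℝ)..Real.pi, Real.sin θ ^ 2 • f θ := by
  rw [satoTateMeasure, integral_withDensity_eq_integral_toReal_smul (by fun_prop) (by simp),
    intervalIntegral.integral_of_le Real.pi_pos.le, ← integral_smul]
  refine integral_congr_ae (.of_forall fun θ ↦ ?_)
  simp only [ENNReal.toReal_ofReal (by positivity : 0 ≤ 2 / Real.pi * Real.sin θ ^ 2), mul_smul]

instance : IsProbabilityMeasure satoTateMeasure := by
  have : IsFiniteMeasure satoTateMeasure := isFiniteMeasure_withDensity_ofReal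
    (by fun_prop : Continuous fun θ ↦ 2 / Real.pi * Real.sin θ ^ 2).integrableOn_Ioc.2
  rw [isProbabilityMeasure_iff_real]
  simpa [integral_sin_sq] using integral_satoTateMeasure fun _ ↦ (1 : ℝ)

theorem integral_satoTateMeasure_stein_cos_eq_zero {g : ℝ → ℝ} (hg : ContDiff ℝ 1 g) :
    ∫ θ, ((1 - Real.cos θ ^ 2) * deriv g (Real.cos θ) - 3 * Real.cos θ * g (Real.cos θ))
      ∂satoTateMeasure = 0 := by
  have hasDerivAt_g (x : ℝ) : HasDerivAt g (deriv g x) x :=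
    (hg.differentiable one_ne_zero x).hasDerivAt
  have hderiv (θ : ℝ) : HasDerivAt (fun θ ↦ -(Real.sin θ ^ 3 * g (Real.cos θ)))
      (Real.sin θ ^ 2 •
        ((1 - Real.cos θ ^ 2) * deriv g (Real.cos θ) - 3 * Real.cos θ * g (Real.cos θ))) θ := by
    refine (((Real.hasDerivAt_sin θ).pow 3).mul
      ((hasDerivAt_g _).comp θ (Real.hasDerivAt_cos θ))).neg.congr_deriv ?_
    simp only [← Real.sin_sq, smul_eq_mul, Pi.pow_apply, Function.comp_apply]
    push_cast
    ring
  rw [integral_satoTateMeasure, intervalIntegral.integral_eq_sub_of_hasDerivAt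
    (fun θ _ ↦ hderiv θ) (Continuous.intervalIntegrable (by fun_prop) _ _)]
  simp

theorem map_re_muH :
    muH.map (fun q : Metric.sphere (0 : ℍ) 1 ↦ (q : ℍ).re) =
      satoTateMeasure.map Real.cos := by
  have := Measure.isProbabilityMeasure_map (μ := muH) measurable_re_unitQuaternion.aemeasurable
  have := Measure.isProbabilityMeasure_map (μ := satoTateMeasure) Real.measurable_cos.aemeasurable
  have eval_stein (p : ℝ[X]) (x : ℝ) : (steinOperator 3 p).eval x =
      (1 - x ^ 2) * deriv (p.eval ·) x - 3 * x * p.eval x := by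
    simp [steinOperator_apply]
  have contDiff_eval (p : ℝ[X]) : ContDiff ℝ 1 (p.eval ·) := by
    simpa using p.contDiff_aeval (𝕜 := ℝ) 1
  refine measure_eq_of_integral_steinOperator_eq_zero (c := 3) (K := Icc (-1) 1)
    (fun n ↦ by positivity) isCompact_Icc ?_ ?_ (fun p ↦ ?_) fun p ↦ ?_
  · exact (ae_map_iff measurable_re_unitQuaternion.aemeasurable measurableSet_Icc).mpr
      (.of_forall re_unitQuaternion_mem_Icc)
  · exact (ae_map_iff Real.measurable_cos.aemeasurable measurableSet_Icc).mpr
      (.of_forall Real.cos_mem_Icc)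
  · rw [integral_map measurable_re_unitQuaternion.aemeasurable
      (Polynomial.continuous _).aestronglyMeasurable]
    simp only [eval_stein]
    exact integral_muH_stein_re_eq_zero (contDiff_eval p)
  · rw [integral_map Real.measurable_cos.aemeasurable
      (Polynomial.continuous _).aestronglyMeasurable]
    simp only [eval_stein]
    exact integral_satoTateMeasure_stein_cos_eq_zero (contDiff_eval p)

theorem map_arccos_re_muH :
    muH.map (fun q : Metric.sphere (0 : ℍ) 1 ↦ Real.arccos (q : ℍ).re) =
      satoTateMeasure := by
  have arccos_cos : Real.arccos ∘ Real.cos =ᵐ[satoTateMeasure] id :=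
    ae_satoTateMeasure_mem_Icc.mono fun θ hθ ↦ Real.arccos_cos hθ.1 hθ.2
  calc
    _ = (muH.map fun q : Metric.sphere (0 : ℍ) 1 ↦ (q : ℍ).re).map Real.arccos :=
      (Measure.map_map Real.measurable_arccos measurable_re_unitQuaternion).symm
    _ = satoTateMeasure.map (Real.arccos ∘ Real.cos) := by
      rw [map_re_muH, Measure.map_map Real.measurable_arccos Real.measurable_cos]
    _ = satoTateMeasure := by rw [Measure.map_congr arccos_cos, Measure.map_id]

theorem aeval_quaternion_X_sq_sub_re_add_normSq (q : ℍ) :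
    aeval q (X ^ 2 - C (2 * q.re) * X + C (Quaternion.normSq q)) = 0 := by
  rw [map_add, map_sub, map_mul, map_pow, aeval_X, aeval_C, aeval_C, Quaternion.algebraMap_def,
    ← Quaternion.self_add_star', ← Quaternion.star_mul_self]
  noncomm_ring

theorem normSq_aeval_C_mul_X_add_C (a b : ℝ) (q : ℍ) :
    Quaternion.normSq (aeval q (C a * X + C b)) =
      a ^ 2 * Quaternion.normSq q + 2 * a * b * q.re + b ^ 2 := by
  simp only [map_add, map_mul, aeval_C, Quaternion.algebraMap_def, aeval_X,
    Quaternion.normSq_def', Quaternion.re_add, Quaternion.re_mul, Quaternion.re_coe,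
    Quaternion.imI_coe, zero_mul, sub_zero, Quaternion.imJ_coe, Quaternion.imK_coe,
    Quaternion.imI_add, Quaternion.imI_mul, add_zero, Quaternion.imJ_add, Quaternion.imJ_mul,
    Quaternion.imK_add, Quaternion.imK_mul]
  ring

theorem norm_aeval_eq_of_re_eq_of_norm_eq (P : ℝ[X]) {q r : ℍ} (hre : q.re = r.re)
    (hnorm : ‖q‖ = ‖r‖) : ‖aeval q P‖ = ‖aeval r P‖ := by
  have hnormSq : Quaternion.normSq q = Quaternion.normSq r := by
    simp only [Quaternion.normSq_eq_norm_mul_self, hnorm]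
  set m : ℝ[X] := X ^ 2 - C (2 * q.re) * X + C (Quaternion.normSq q) with hm
  have m_monic : m.Monic := by unfold m; monicity!
  have m_natDegree : m.natDegree = 2 := by unfold m; compute_degree!
  have aeval_q : aeval q m = 0 := aeval_quaternion_X_sq_sub_re_add_normSq q
  have aeval_r : aeval r m = 0 := by
    rw [hm, hre, hnormSq, aeval_quaternion_X_sq_sub_re_add_normSq]
  have natDegree_le_one : (P %ₘ m).natDegree ≤ 1 := by
    have := natDegree_modByMonic_lt P m_monic (by intro h; simp [h] at m_natDegree)
    omega
  obtain ⟨a, b, hab⟩ := exists_eq_X_add_C_of_natDegree_le_one natDegree_le_one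
  have normSq_eq : Quaternion.normSq (aeval q P) = Quaternion.normSq (aeval r P) := by
    rw [← aeval_modByMonic_eq_self_of_root aeval_q, ← aeval_modByMonic_eq_self_of_root aeval_r,
      hab, normSq_aeval_C_mul_X_add_C, normSq_aeval_C_mul_X_add_C, hre, hnormSq]
  simpa only [Quaternion.normSq_eq_norm_mul_self,
    mul_self_inj (norm_nonneg _) (norm_nonneg _)] using normSq_eq

theorem norm_coeComplex (z : ℂ) : ‖(z : ℍ)‖ = ‖z‖ := by
  rw [← mul_self_inj (norm_nonneg _) (norm_nonneg _), ← Quaternion.normSq_eq_norm_mul_self,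
    Complex.norm_mul_self_eq_normSq, Quaternion.normSq_def', Complex.normSq_apply]
  simp [sq]

theorem norm_aeval_coeComplex (P : ℝ[X]) (z : ℂ) : ‖aeval (z : ℍ) P‖ = ‖aeval z P‖ := by
  rw [← norm_coeComplex (aeval z P), ← Quaternion.coe_ofComplex, aeval_algHom_apply]

theorem norm_aeval_unitQuaternion (P : ℝ[X]) (q : Metric.sphere (0 : ℍ) 1) :
    ‖aeval (q : ℍ) P‖ = ‖aeval ((Real.cos (Real.arccos (q : ℍ).re) : ℂ) +
      Real.sin (Real.arccos (q : ℍ).re) * Complex.I) P‖ := by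
  rw [← norm_aeval_coeComplex]
  refine norm_aeval_eq_of_re_eq_of_norm_eq P ?_ ?_
  · obtain ⟨h₁, h₂⟩ := re_unitQuaternion_mem_Icc q
    simp [-Complex.ofReal_cos, -Complex.ofReal_sin, Real.cos_arccos h₁ h₂]
  · rw [norm_eq_of_mem_sphere, norm_coeComplex, Complex.ofReal_cos, Complex.ofReal_sin,
      Complex.norm_cos_add_sin_mul_I]

/-- reduction of the quaternionic Mahler measure of a real polynomial
to a one-dimensional integral over the unit circle. -/
theorem mahlerH_real_poly_eq_circle_integral (P : Polynomial ℝ) (hP : P ≠ 0) :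
    (∫ q : Metric.sphere (0 : Quaternion ℝ) 1,
        Real.log ‖Polynomial.aeval (q : Quaternion ℝ) P‖ ∂muH) =
      (2 / Real.pi) *
        ∫ θ in (0 : ℝ)..Real.pi,
          Real.log ‖Polynomial.aeval ((Real.cos θ : ℂ) + Real.sin θ * Complex.I) P‖ *
            Real.sin θ ^ 2 := by
  let F (θ : ℝ) : ℝ := Real.log ‖aeval ((Real.cos θ : ℂ) + Real.sin θ * Complex.I) P‖
  have measurable_F : Measurable F := Real.measurable_log.comp (Continuous.measurable (by fun_prop))
  have measurable_angle :
      Measurable fun q : Metric.sphere (0 : ℍ) 1 ↦ Real.arccos (q : ℍ).re :=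
    Real.measurable_arccos.comp measurable_re_unitQuaternion
  calc
    _ = ∫ q : Metric.sphere (0 : ℍ) 1, F (Real.arccos (q : ℍ).re) ∂muH := by
      simp only [F, norm_aeval_unitQuaternion]
    _ = ∫ θ, F θ ∂satoTateMeasure := by
      rw [← map_arccos_re_muH, integral_map measurable_angle.aemeasurable
        measurable_F.aestronglyMeasurable]
    _ = _ := by
      simp only [integral_satoTateMeasure, smul_eq_mul, F, mul_comm]
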